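/- Pointwise trace identity relating the symmetrized and unsymmetrized anomaly integrands under conjugation of M by a diagonal matrix D: with M̃ := D^{-1}MD, one has at every point (z,t): (1/2)Tr(M̃′M̃^{-1} · ∂M̃ · M̃^{-1}) − (1/2)Tr(M′M^{-1} · ∂M · M^{-1}) + Tr( D^{-1}D′ · ( ∂M·M^{-1} − ∂D·D^{-1} + M·D^{-1}∂D·M^{-1} ) ) − Tr(M^{-1}M′ · ∂D·D^{-1}) = (1/2)Tr( D′D^{-1} · ( ∂M·M^{-1} + M^{-1}∂M + M·∂D·D^{-1}·M^{-1} − M^{-1}·∂D·D^{-1}·M ) ) − (1/2)Tr( ∂D·D^{-1} · ( M^{-1}M′ + M′M^{-1} ) ). -/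

import Mathlib

/-! Put `A = D′D⁻¹` and `B = ∂D·D⁻¹`. Off-diagonal entries of `D` vanish identically on the open
set `U × I`, so `D′` and `∂D` are diagonal as well; hence they commute with `D⁻¹`, giving
`A = D⁻¹D′` and `B = D⁻¹∂D` (`diag_comm_inv`). Then
`M̃′M̃⁻¹ = D⁻¹(−A + M′M⁻¹ + MAM⁻¹)D` and `∂M̃·M̃⁻¹ = D⁻¹(−B + ∂M·M⁻¹ + MBM⁻¹)D`
(`gauge_log_deriv`), so conjugation by `D` drops out of the trace of their product. Expanding that
product and using cyclicity of the trace (`trace_product_expand`), the identity becomes linear in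
the traces of words in `A`, `B`, `M` and its derivatives. -/

noncomputable section

/-- Square `N × N` complex matrices. -/
abbrev Mat (N : ℕ) := Matrix (Fin N) (Fin N) ℂ

open Matrix

/-- Derivatives of the off-diagonal entries of a family that is diagonal near `x` vanish. -/
lemma isDiag_of_hasDerivAt {𝕜 : Type*} [NontriviallyNormedField 𝕜] [NormedAlgebra 𝕜 ℂ] {N : ℕ}
    {F : 𝕜 → Mat N} {F' : Mat N} {x : 𝕜} {S : Set 𝕜} (hS : IsOpen S) (hx : x ∈ S)
    (hF : ∀ w ∈ S, (F w).IsDiag)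
    (hF' : ∀ i j : Fin N, HasDerivAt (fun w => F w i j) (F' i j) x) : F'.IsDiag := by
  intro i j hij
  have h0 : HasDerivAt (fun w => F w i j) 0 x :=
    (hasDerivAt_const x (0 : ℂ)).congr_of_eventuallyEq
      (Filter.eventually_of_mem (hS.mem_nhds hx) fun w hw => hF w hw hij)
  exact (hF' i j).unique h0

lemma diag_comm_inv {N : ℕ} {d di x : Mat N} (hd : d.IsDiag) (hx : x.IsDiag)
    (h1 : d * di = 1) (h2 : di * d = 1) : di * x = x * di := by
  have hc : d * x = x * d := by
    rw [← hd.diagonal_diag, ← hx.diagonal_diag, diagonal_mul_diagonal, diagonal_mul_diagonal]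
    simp only [mul_comm]
  calc di * x = di * (x * d) * di := by rw [mul_assoc, mul_assoc, h1, mul_one]
    _ = x * di := by rw [← hc, ← mul_assoc di, h2, one_mul]

/-- Gauge transformation of a logarithmic derivative: for `M̃ = d⁻¹md`, with `x` a derivative of
`d` and `y` the corresponding derivative of `m`. -/
lemma gauge_log_deriv {N : ℕ} {m mi d di x y : Mat N} (hm : m * mi = 1) (hd : d * di = 1) :
    (-(di * x * di) * m * d + di * y * d + di * m * x) * (di * mi * d)
      = di * (-(x * di) + y * mi + m * (x * di) * mi) * d := by
  have e1 : d * (di * (mi * d)) = mi * d := by rw [← mul_assoc, hd, one_mul]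
  have e2 : m * (mi * d) = d := by rw [← mul_assoc, hm, one_mul]
  simp only [add_mul, mul_add, neg_mul, mul_neg, mul_assoc, e1, e2]

/-- Cyclicity collapses the nine terms: both `A * B` and `m * (A * B) * mi` contribute
`trace (A * B)`, and no commutation between `A`, `B` and the other factors is needed. -/
lemma trace_product_expand {N : ℕ} {m mi p q A B : Mat N} (h2 : mi * m = 1) :
    trace ((-A + p * mi + m * A * mi) * (-B + q * mi + m * B * mi))
      = 2 * trace (A * B) - trace (A * (q * mi)) - trace (A * (m * B * mi))
        - trace (B * (p * mi)) + trace (p * mi * q * mi) + trace (mi * p * B)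
        - trace (A * (mi * B * m)) + trace (A * (mi * q)) := by
  have c (X : Mat N) : mi * (m * X) = X := by rw [← mul_assoc, h2, one_mul]
  have t1 : trace (p * (mi * B)) = trace (B * (p * mi)) := by
    rw [← mul_assoc, trace_mul_comm]
  have t2 : trace (p * (B * mi)) = trace (mi * (p * B)) := by
    rw [← mul_assoc, trace_mul_comm]
  have t3 : trace (m * (A * (mi * B))) = trace (A * (mi * (B * m))) := by
    rw [trace_mul_comm]; simp only [mul_assoc]
  have t4 : trace (m * (A * (mi * (q * mi)))) = trace (A * (mi * q)) := by
    rw [trace_mul_comm]; simp only [mul_assoc, h2, mul_one]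
  have t5 : trace (m * (A * (B * mi))) = trace (A * B) := by
    rw [trace_mul_comm]; simp only [mul_assoc, h2, mul_one]
  simp only [add_mul, mul_add, neg_mul, mul_neg, mul_assoc, c, trace_add, trace_neg,
    t1, t2, t3, t4, t5]
  ring

/-- **Pointwise trace identity relating the symmetrized and unsymmetrized anomaly
integrands under conjugation of `M` by a diagonal matrix `D`.**  With
`M̃ := D⁻¹MD`, at every point `(z,t) ∈ U × I`:
`(1/2)Tr(M̃′M̃⁻¹·∂M̃·M̃⁻¹) − (1/2)Tr(M′M⁻¹·∂M·M⁻¹)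
  + Tr(D⁻¹D′·(∂M·M⁻¹ − ∂D·D⁻¹ + M·D⁻¹∂D·M⁻¹)) − Tr(M⁻¹M′·∂D·D⁻¹)
= (1/2)Tr(D′D⁻¹·(∂M·M⁻¹ + M⁻¹∂M + M·∂D·D⁻¹·M⁻¹ − M⁻¹·∂D·D⁻¹·M))
  − (1/2)Tr(∂D·D⁻¹·(M⁻¹M′ + M′M⁻¹))`.
Here `F′` is the `z`-derivative and `∂F` the `t`-derivative, the composite
quantities being expanded by the Leibniz rule:
`M̃′ = −D⁻¹D′D⁻¹MD + D⁻¹M′D + D⁻¹MD′`,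
`∂M̃ = −D⁻¹∂D·D⁻¹MD + D⁻¹∂M·D + D⁻¹M∂D`, `M̃⁻¹ = D⁻¹M⁻¹D`. -/
theorem anomaly_integrand_trace_identity {N : ℕ} (hN : 1 ≤ N)
    (U : Set ℂ) (hU : IsOpen U) (a b : ℝ)
    (M Minv M' dM D Dinv D' dD : ℂ → ℝ → Mat N)
    (hDdiag : ∀ z ∈ U, ∀ t ∈ Set.Ioo a b, (D z t).IsDiag)
    (hMinv : ∀ z ∈ U, ∀ t ∈ Set.Ioo a b, M z t * Minv z t = 1 ∧ Minv z t * M z t = 1)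
    (hDinv : ∀ z ∈ U, ∀ t ∈ Set.Ioo a b, D z t * Dinv z t = 1 ∧ Dinv z t * D z t = 1)
    (hM' : ∀ z ∈ U, ∀ t ∈ Set.Ioo a b, ∀ i j : Fin N,
      HasDerivAt (fun w => M w t i j) (M' z t i j) z)
    (hdM : ∀ z ∈ U, ∀ t ∈ Set.Ioo a b, ∀ i j : Fin N,
      HasDerivAt (fun s => M z s i j) (dM z t i j) t)
    (hD' : ∀ z ∈ U, ∀ t ∈ Set.Ioo a b, ∀ i j : Fin N,
      HasDerivAt (fun w => D w t i j) (D' z t i j) z)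
    (hdD : ∀ z ∈ U, ∀ t ∈ Set.Ioo a b, ∀ i j : Fin N,
      HasDerivAt (fun s => D z s i j) (dD z t i j) t) :
    ∀ z ∈ U, ∀ t ∈ Set.Ioo a b,
      (fun m mi m' dm d di d' dd =>
        (fun mt mtinv mt' dmt =>
          (1 / 2 : ℂ) * Matrix.trace (mt' * mtinv * dmt * mtinv)
            - (1 / 2 : ℂ) * Matrix.trace (m' * mi * dm * mi)
            + Matrix.trace ((di * d') * (dm * mi - dd * di + m * di * dd * mi))
            - Matrix.trace ((mi * m') * (dd * di))
          = (1 / 2 : ℂ) * Matrix.trace ((d' * di) *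
              (dm * mi + mi * dm + m * dd * di * mi - mi * dd * di * m))
            - (1 / 2 : ℂ) * Matrix.trace ((dd * di) * (mi * m' + m' * mi)))
          (di * m * d) (di * mi * d)
          (-(di * d' * di) * m * d + di * m' * d + di * m * d')
          (-(di * dd * di) * m * d + di * dm * d + di * m * dd))
        (M z t) (Minv z t) (M' z t) (dM z t) (D z t) (Dinv z t) (D' z t) (dD z t) := by
  intro z hz t ht
  obtain ⟨hm1, hm2⟩ := hMinv z hz t ht
  obtain ⟨hd1, hd2⟩ := hDinv z hz t ht
  have hd := hDdiag z hz t ht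
  have hA := diag_comm_inv hd
    (isDiag_of_hasDerivAt (F := fun w => D w t) hU hz (fun w hw => hDdiag w hw t ht)
      (hD' z hz t ht)) hd1 hd2
  have hB := diag_comm_inv hd
    (isDiag_of_hasDerivAt (F := fun s => D z s) isOpen_Ioo ht (fun s hs => hDdiag z hz s hs)
      (hdD z hz t ht)) hd1 hd2
  generalize M z t = m, Minv z t = mi, M' z t = p, dM z t = q, D z t = d, Dinv z t = di,
    D' z t = x, dD z t = y at *
  -- conjugation by `d` is invisible to the trace
  have conj (X Y : Mat N) : trace (di * X * d * (di * Y * d)) = trace (X * Y) := by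
    have e (Z : Mat N) : d * (di * Z) = Z := by rw [← mul_assoc, hd1, one_mul]
    simp only [mul_assoc, e]
    rw [trace_mul_comm]
    simp only [mul_assoc, hd1, mul_one]
  rw [mul_assoc (_ * _) _ (di * mi * d), gauge_log_deriv hm1 hd1, gauge_log_deriv hm1 hd1, conj,
    trace_product_expand hm2, mul_assoc m di y, hA, hB, mul_assoc m y di,
    mul_assoc mi y di]
  -- the remaining discrepancy is the order of the factors in `trace (B * (mi * p))`
  generalize x * di = A, y * di = B
  simp only [mul_add, mul_sub, trace_add, trace_sub]
  rw [trace_mul_comm B (mi * p)]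
  ring
end
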